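/- arXiv:1501.07036 — 2 statements merged into one kernel-verified Lean document; each statement's English description precedes it below -/
import Mathlib

section
/- Let N ≥ 1, let ‖·‖ be any norm on ℝ^N, and let M ⊆ ℝ^N be a compact and locally downwards closed set. Then for every ξ > 0 there exist a set M̂ ⊆ ℝ^N and a Lipschitz map Ψ : M̂ → M such that M ⊆ interior(M̂), Lip(Ψ) ≤ 1 + ξ (with respect to ‖·‖), and ‖x − Ψ(x)‖ ≤ ξ for all x ∈ M̂. -/
/-- `M` is downwards closed relative to the open set `U` and the vector `u`. -/
def DownwardsClosedRel {N : ℕ} (M U : Set (Fin N → ℝ)) (u : Fin N → ℝ) : Prop :=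
  IsClosed M ∧ ∀ y ∈ U ∩ M, ∀ t : ℝ, 0 < t → y - t • u ∈ U → y - t • u ∈ interior M

/-- `M` is locally downwards closed. -/
def LocallyDownwardsClosed {N : ℕ} (M : Set (Fin N → ℝ)) : Prop :=
  IsClosed M ∧ ∀ x : Fin N → ℝ, ∃ (U : Set (Fin N → ℝ)) (u : Fin N → ℝ),
    IsOpen U ∧ x ∈ U ∧ u ≠ 0 ∧ DownwardsClosedRel M U u

theorem nn_zero_aux {N : ℕ} (nn : (Fin N → ℝ) → ℝ)
    (nn_eq_zero : ∀ x, nn x = 0 ↔ x = 0) : nn 0 = 0 := (nn_eq_zero 0).2 rfl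

theorem nn_neg_aux {N : ℕ} (nn : (Fin N → ℝ) → ℝ)
    (nn_smul : ∀ (a : ℝ) (x : Fin N → ℝ), nn (a • x) = |a| * nn x) (x) : nn (-x) = nn x := by
  have := nn_smul (-1) x
  simpa using this

theorem nn_nonneg_aux {N : ℕ} (nn : (Fin N → ℝ) → ℝ)
    (nn_add : ∀ x y, nn (x + y) ≤ nn x + nn y)
    (nn_smul : ∀ (a : ℝ) (x : Fin N → ℝ), nn (a • x) = |a| * nn x)
    (nn_eq_zero : ∀ x, nn x = 0 ↔ x = 0) (x) : 0 ≤ nn x := by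
  have h1 := nn_add x (-x)
  rw [nn_neg_aux nn nn_smul, add_neg_cancel, nn_zero_aux nn nn_eq_zero] at h1
  linarith

theorem nn_sum_aux {N : ℕ} {ι : Type*} (nn : (Fin N → ℝ) → ℝ)
    (nn_add : ∀ x y, nn (x + y) ≤ nn x + nn y)
    (nn_eq_zero : ∀ x, nn x = 0 ↔ x = 0) (s : Finset ι) (f : ι → Fin N → ℝ) :
    nn (∑ i ∈ s, f i) ≤ ∑ i ∈ s, nn (f i) := by
  classical
  induction s using Finset.induction_on with
  | empty => simp [nn_zero_aux nn nn_eq_zero]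
  | insert a s ha ih =>
    rw [Finset.sum_insert ha, Finset.sum_insert ha]
    exact (nn_add _ _).trans (by linarith)

theorem nn_equiv_aux {N : ℕ} (nn : (Fin N → ℝ) → ℝ)
    (nn_add : ∀ x y, nn (x + y) ≤ nn x + nn y)
    (nn_smul : ∀ (a : ℝ) (x : Fin N → ℝ), nn (a • x) = |a| * nn x)
    (nn_eq_zero : ∀ x, nn x = 0 ↔ x = 0) : ∃ K : ℝ, 0 ≤ K ∧ ∀ x, ‖x‖ ≤ K * nn x := by
  have hnn := nn_nonneg_aux nn nn_add nn_smul nn_eq_zero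
  set C : ℝ := ∑ i : Fin N, nn (Pi.single i 1) with hC
  have hC0 : 0 ≤ C := Finset.sum_nonneg fun i _ => hnn _
  have hup : ∀ x, nn x ≤ C * ‖x‖ := by
    intro x
    have hx : x = ∑ i, x i • (Pi.single i (1 : ℝ) : Fin N → ℝ) := pi_eq_sum_univ' x |>.trans (by
      refine Finset.sum_congr rfl fun i _ => ?_
      congr 1)
    calc nn x = nn (∑ i, x i • (Pi.single i (1 : ℝ) : Fin N → ℝ)) := by rw [← hx]
      _ ≤ ∑ i, nn (x i • (Pi.single i (1 : ℝ) : Fin N → ℝ)) :=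
        nn_sum_aux nn nn_add nn_eq_zero _ _
      _ ≤ ∑ i, nn (Pi.single i (1 : ℝ)) * ‖x‖ := by
        refine Finset.sum_le_sum fun i _ => ?_
        rw [nn_smul, mul_comm]
        exact mul_le_mul_of_nonneg_left (norm_le_pi_norm x i) (hnn _)
      _ = C * ‖x‖ := by rw [hC, Finset.sum_mul]
  have hcont : Continuous nn := by
    have : LipschitzWith C.toNNReal nn := by
      refine LipschitzWith.of_le_add_mul _ fun x y => ?_
      have h1 := nn_add y (x - y)
      have h2 := hup (x - y)
      rw [add_sub_cancel] at h1
      rw [dist_eq_norm, Real.coe_toNNReal _ hC0]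
      linarith
    exact this.continuous
  rcases (Metric.sphere (0 : Fin N → ℝ) 1).eq_empty_or_nonempty with he | hne
  · refine ⟨0, le_rfl, fun x => ?_⟩
    by_cases hx : x = 0
    · simp [hx]
    · exfalso
      have : (‖x‖⁻¹ • x) ∈ Metric.sphere (0 : Fin N → ℝ) 1 := by
        simp [norm_smul, hx]
      simp [he] at this
  · obtain ⟨z, hz, hmin⟩ := (isCompact_sphere (0 : Fin N → ℝ) 1).exists_isMinOn hne hcont.continuousOn
    have hz0 : z ≠ 0 := by
      rintro rfl
      simp at hz
    have hpos : 0 < nn z := lt_of_le_of_ne (hnn z) fun h => hz0 ((nn_eq_zero z).1 h.symm)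
    refine ⟨(nn z)⁻¹, by positivity, fun x => ?_⟩
    by_cases hx : x = 0
    · simp [hx, nn_zero_aux nn nn_eq_zero]
    · have hx' : 0 < ‖x‖ := norm_pos_iff.2 hx
      have hm : (‖x‖⁻¹ • x) ∈ Metric.sphere (0 : Fin N → ℝ) 1 := by
        simp [norm_smul, hx]
      have h := hmin hm
      simp only [Set.mem_ofPred_eq, nn_smul, abs_inv, abs_norm] at h
      rw [inv_mul_eq_div, le_div_iff₀ hx'] at h
      rw [inv_mul_eq_div, le_div_iff₀ hpos]
      linarith

theorem step_aux {N : ℕ} {ι : Type*} (M : Set (Fin N → ℝ)) (S : Finset ι)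
    (U : ι → Set (Fin N → ℝ)) (u : ι → Fin N → ℝ) (hU : ∀ i, DownwardsClosedRel M (U i) (u i))
    (a : ι → ℝ) (ha : ∀ i, 0 ≤ a i) (x : Fin N → ℝ) (hx : x ∈ M)
    (hmem : ∀ i, 0 < a i → ∀ S' ⊆ S, x - ∑ j ∈ S', a j • u j ∈ U i) :
    x - ∑ j ∈ S, a j • u j ∈ M ∧
      ((∃ i ∈ S, 0 < a i) → x - ∑ j ∈ S, a j • u j ∈ interior M) := by
  classical
  induction S using Finset.induction_on with
  | empty => simpa using hx
  | insert i S hi ih =>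
    obtain ⟨h1, h2⟩ := ih fun k hk S' hS' =>
      hmem k hk S' (hS'.trans (Finset.subset_insert _ _))
    have heq : x - ∑ j ∈ insert i S, a j • u j = x - ∑ j ∈ S, a j • u j - a i • u i := by
      rw [Finset.sum_insert hi]; abel
    rcases (ha i).eq_or_lt with h0 | hpos
    · rw [heq, ← h0, zero_smul, sub_zero]
      refine ⟨h1, ?_⟩
      rintro ⟨k, hk, hk0⟩
      rcases Finset.mem_insert.1 hk with rfl | hk
      · exact absurd h0 hk0.ne
      · exact h2 ⟨k, hk, hk0⟩
    · have hmemInt : x - ∑ j ∈ insert i S, a j • u j ∈ interior M := by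
        have hb := hmem i hpos _ subset_rfl
        rw [heq] at hb ⊢
        exact (hU i).2 _ ⟨hmem i hpos _ (Finset.subset_insert _ _), h1⟩ _ hpos hb
      exact ⟨interior_subset hmemInt, fun _ => hmemInt⟩

/-- For a compact, locally downwards closed `M ⊆ ℝ^N` and any norm `nn` on `ℝ^N`:
for every `ξ > 0` there are `M̂ ⊇ M` with `M ⊆ interior M̂` and a map `Ψ : M̂ → M`
with `Lip(Ψ) ≤ 1 + ξ` and `nn (x - Ψ x) ≤ ξ` on `M̂`. -/
theorem statement1 {N : ℕ} (hN : 1 ≤ N)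
    (nn : (Fin N → ℝ) → ℝ)
    (nn_add : ∀ x y, nn (x + y) ≤ nn x + nn y)
    (nn_smul : ∀ (a : ℝ) (x : Fin N → ℝ), nn (a • x) = |a| * nn x)
    (nn_eq_zero : ∀ x, nn x = 0 ↔ x = 0)
    (M : Set (Fin N → ℝ)) (hMcpt : IsCompact M) (hMldc : LocallyDownwardsClosed M)
    (ξ : ℝ) (hξ : 0 < ξ) :
    ∃ (Mh : Set (Fin N → ℝ)) (Ψ : (Fin N → ℝ) → (Fin N → ℝ)),
      M ⊆ interior Mh ∧
      (∀ x ∈ Mh, Ψ x ∈ M) ∧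
      (∀ x ∈ Mh, ∀ y ∈ Mh, nn (Ψ x - Ψ y) ≤ (1 + ξ) * nn (x - y)) ∧
      (∀ x ∈ Mh, nn (x - Ψ x) ≤ ξ) := by
  have hnn := nn_nonneg_aux nn nn_add nn_smul nn_eq_zero
  obtain ⟨K, hK0, hK⟩ := nn_equiv_aux nn nn_add nn_smul nn_eq_zero
  obtain ⟨-, hloc⟩ := hMldc
  choose U u hUo hxU _ hU using hloc
  have hr : ∀ x, ∃ r > 0, Metric.ball x (2 * r) ⊆ U x := by
    intro x
    obtain ⟨e, he, hb⟩ := Metric.isOpen_iff.1 (hUo x) x (hxU x)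
    exact ⟨e / 2, by positivity, by rwa [mul_div_cancel₀ _ two_ne_zero]⟩
  choose r hr0 hrU using hr
  obtain ⟨T, -, hT⟩ := hMcpt.elim_nhds_subcover (fun x => Metric.ball x (r x))
    fun x _ => Metric.ball_mem_nhds x (hr0 x)
  set φ : (Fin N → ℝ) → (Fin N → ℝ) → ℝ := fun i x => max 0 (r i - dist x i) with hφ
  have hφ0 : ∀ i x, 0 ≤ φ i x := fun i x => le_max_left _ _
  have hφr : ∀ i x, φ i x ≤ r i := fun i x =>
    max_le (hr0 i).le (by linarith [dist_nonneg (x := x) (y := i)])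
  have hφp : ∀ i x, 0 < φ i x ↔ dist x i < r i := fun i x => by simp [hφ]
  have hφL : ∀ i x y, |φ i x - φ i y| ≤ K * nn (x - y) := fun i x y => by
    refine le_trans ?_ (hK _)
    rw [← dist_eq_norm]
    refine (abs_max_sub_max_le_max _ _ _ _).trans ?_
    simp only [sub_self, abs_zero, sub_sub_sub_cancel_left]
    refine max_le dist_nonneg ?_
    rw [abs_sub_comm]
    exact abs_dist_sub_le x y i
  have hφc : ∀ i, Continuous (φ i) := fun i => by
    simp only [hφ]; fun_prop

  have htend : ∀ c : ℝ, Filter.Tendsto (fun e : ℝ => e * c) (nhdsWithin 0 (Set.Ioi 0)) (nhds 0) := by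
    intro c
    have : Filter.Tendsto (fun e : ℝ => e * c) (nhds 0) (nhds (0 * c)) :=
      (continuous_id.mul continuous_const).tendsto 0
    rw [zero_mul] at this
    exact this.mono_left nhdsWithin_le_nhds
  have hev : ∀ c b : ℝ, 0 < b → ∀ᶠ e in nhdsWithin (0 : ℝ) (Set.Ioi 0), e * c < b :=
    fun c b hb => (htend c).eventually_lt_const hb
  obtain ⟨ε, ⟨⟨h1, h2⟩, h3⟩, hε⟩ :=
    ((((Filter.eventually_all_finset T).2 fun i _ =>
      hev (∑ j ∈ T, r j * ‖u j‖) (r i) (hr0 i)).and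
      (hev (∑ j ∈ T, r j * nn (u j)) ξ hξ)).and
      (hev (∑ j ∈ T, K * nn (u j)) ξ hξ) |>.and self_mem_nhdsWithin).exists
  have hε : 0 < ε := hε
  set Ψ : (Fin N → ℝ) → (Fin N → ℝ) := fun x => x - ∑ j ∈ T, (ε * φ j x) • u j with hΨ
  have hΨc : Continuous Ψ := by
    refine continuous_id.sub (continuous_finsetSum _ fun j _ => ?_)
    exact (continuous_const.mul (hφc j)).smul continuous_const
  have hopen : IsOpen (Ψ ⁻¹' interior M) := isOpen_interior.preimage hΨc
  refine ⟨Ψ ⁻¹' interior M, Ψ, ?_, fun x hx => interior_subset hx, ?_, ?_⟩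
  · rw [hopen.interior_eq]
    intro x hx
    obtain ⟨i, hi⟩ := Set.mem_iUnion.1 (hT hx)
    obtain ⟨hiT, hi⟩ := Set.mem_iUnion.1 hi
    let a : (Fin N → ℝ) → ℝ := fun j => if j ∈ T then ε * φ j x else 0
    have haT : ∀ j ∈ T, a j = ε * φ j x := fun j hj => if_pos hj
    have key := (step_aux M T U u hU a (fun j => by
      by_cases hj : j ∈ T
      · rw [haT j hj]; exact mul_nonneg hε.le (hφ0 _ _)
      · simp [a, hj]) x hx ?_).2 ⟨i, hiT, by
        rw [haT i hiT]; exact mul_pos hε ((hφp _ _).2 hi)⟩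
    · have : ∑ j ∈ T, a j • u j = ∑ j ∈ T, (ε * φ j x) • u j :=
        Finset.sum_congr rfl fun j hj => by rw [haT j hj]
      rw [this] at key
      exact key
    · intro k hk S' hS'
      have hkT : k ∈ T := by
        by_contra h
        simp [a, h] at hk
      rw [haT k hkT] at hk
      have hd : dist x k < r k := (hφp _ _).1 (pos_of_mul_pos_right hk hε.le)
      apply hrU
      have hn : ‖∑ j ∈ S', a j • u j‖ ≤ ε * ∑ j ∈ T, r j * ‖u j‖ := by
        calc ‖∑ j ∈ S', a j • u j‖ ≤ ∑ j ∈ S', ε * (r j * ‖u j‖) := by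
              refine norm_sum_le_of_le _ fun j hj => ?_
              rw [haT j (hS' hj), norm_smul, Real.norm_eq_abs,
                abs_of_nonneg (mul_nonneg hε.le (hφ0 _ _)), mul_assoc]
              gcongr
              exact hφr _ _
          _ ≤ ∑ j ∈ T, ε * (r j * ‖u j‖) :=
            Finset.sum_le_sum_of_subset_of_nonneg hS' fun j _ _ =>
              mul_nonneg hε.le (mul_nonneg (hr0 j).le (norm_nonneg _))
          _ = _ := by rw [Finset.mul_sum]
      have hh := h1 k hkT
      have : dist (x - ∑ j ∈ S', a j • u j) x = ‖∑ j ∈ S', a j • u j‖ := by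
        rw [dist_eq_norm]; simp
      rw [Metric.mem_ball]
      have := dist_triangle (x - ∑ j ∈ S', a j • u j) x k
      linarith
  · intro x _ y _
    have heq : Ψ x - Ψ y = (x - y) + ∑ j ∈ T, (ε * (φ j y - φ j x)) • u j := by
      simp only [hΨ, mul_sub, sub_smul, Finset.sum_sub_distrib]
      abel
    have hs : nn (∑ j ∈ T, (ε * (φ j y - φ j x)) • u j)
        ≤ (ε * ∑ j ∈ T, K * nn (u j)) * nn (x - y) := by
      refine (nn_sum_aux nn nn_add nn_eq_zero _ _).trans ?_
      rw [Finset.mul_sum, Finset.sum_mul]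
      refine Finset.sum_le_sum fun j _ => ?_
      rw [nn_smul, abs_mul, abs_of_pos hε, abs_sub_comm]
      have := mul_le_mul_of_nonneg_left (mul_le_mul_of_nonneg_right (hφL j x y) (hnn (u j))) hε.le
      linarith
    rw [heq]
    have h4 := nn_add (x - y) (∑ j ∈ T, (ε * (φ j y - φ j x)) • u j)
    have h5 := mul_le_mul_of_nonneg_right h3.le (hnn (x - y))
    linarith
  · intro x _
    have heq : x - Ψ x = ∑ j ∈ T, (ε * φ j x) • u j := by simp [hΨ]
    rw [heq]
    refine (nn_sum_aux nn nn_add nn_eq_zero _ _).trans (le_trans ?_ h2.le)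
    rw [Finset.mul_sum]
    refine Finset.sum_le_sum fun j _ => ?_
    rw [nn_smul, abs_of_nonneg (mul_nonneg hε.le (hφ0 _ _)), mul_assoc]
    exact mul_le_mul_of_nonneg_left (mul_le_mul_of_nonneg_right (hφr _ _) (hnn _)) hε.le
end

section
/- Let N ≥ 1, let x₀ ∈ ℝ^N, δ > 0, and consider the mesh of hypercubes determined by the lattice 𝒵 = {x₀ + δζ : ζ ∈ ℤ^N}: for ζ ∈ ℤ^N let C_ζ be the hypercube with vertices x₀ + δ(ζ + γ), γ ∈ {0,1}^N. Let f be a real-valued function defined on 𝒵. Then for any ζ, ζ' ∈ ℤ^N and any x ∈ C_ζ ∩ C_{ζ'}, one has Λ(f, C_ζ)(x) = Λ(f, C_{ζ'})(x); that is, the coordinatewise affine interpolation functions of the mesh hypercubes agree on overlaps, so they define a single function on the union of the hypercubes. -/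
/-- The coordinatewise affine interpolation `Λ(f,C)` of `f` on the hypercube with
vertices `v_γ = w + δγ`, `γ ∈ {0,1}^N`. -/
noncomputable def interpLam {N : ℕ} (w : Fin N → ℝ) (δ : ℝ) (f : (Fin N → ℝ) → ℝ)
    (x : Fin N → ℝ) : ℝ :=
  ∑ γ : Fin N → Bool,
    (∏ i, if γ i then (x i - w i) / δ else 1 - (x i - w i) / δ) *
      f (fun i => w i + if γ i then δ else 0)

/-- Comparison of the weights and vertices of two mesh intervals in one coordinate. -/
theorem interp_coord (a δ t : ℝ) (hδ : 0 < δ) (m n : ℤ)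
    (h : t ∈ Set.Icc (a + δ * m) (a + δ * m + δ))
    (h' : t ∈ Set.Icc (a + δ * n) (a + δ * n + δ)) (b : Bool) :
    ((if b then (t - (a + δ * m)) / δ else 1 - (t - (a + δ * m)) / δ) =
      (if (b ^^ decide (m ≠ n)) then (t - (a + δ * n)) / δ else 1 - (t - (a + δ * n)) / δ)) ∧
    ((if b then (t - (a + δ * m)) / δ else 1 - (t - (a + δ * m)) / δ) = 0 ∨
      (a + δ * m + if b then δ else 0) =
        (a + δ * n + if (b ^^ decide (m ≠ n)) then δ else 0)) := by
  obtain ⟨h1, h2⟩ := h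
  obtain ⟨h3, h4⟩ := h'
  have e1 : (m : ℝ) ≤ n + 1 := by
    by_contra hc
    push Not at hc
    nlinarith
  have e2 : (n : ℝ) ≤ m + 1 := by
    by_contra hc
    push Not at hc
    nlinarith
  have e1' : m ≤ n + 1 := by exact_mod_cast e1
  have e2' : n ≤ m + 1 := by exact_mod_cast e2
  have hne : δ ≠ 0 := hδ.ne'
  have key : m = n ∨ m = n + 1 ∨ n = m + 1 := by omega
  rcases key with rfl | rfl | rfl
  · simp
  · push_cast at *
    have ht : t = a + δ * n + δ := by linarith
    subst ht
    have q1 : (a + δ * n + δ - (a + δ * (n + 1))) / δ = 0 := by field_simp; ring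
    have q2 : (a + δ * n + δ - (a + δ * n)) / δ = 1 := by field_simp; ring
    rw [q1, q2]
    cases b <;> simp
    ring
  · push_cast at *
    have ht : t = a + δ * m + δ := by linarith
    subst ht
    have q1 : (a + δ * m + δ - (a + δ * (m + 1))) / δ = 0 := by field_simp; ring
    have q2 : (a + δ * m + δ - (a + δ * m)) / δ = 1 := by field_simp; ring
    rw [q1, q2]
    cases b <;> simp
    ring

/-- On the mesh of hypercubes determined by the lattice `{x₀ + δζ : ζ ∈ ℤ^N}`, the
coordinatewise affine interpolation functions of two mesh hypercubes agree at every
point lying in both hypercubes. -/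
theorem statement18 {N : ℕ} (hN : 1 ≤ N)
    (x₀ : Fin N → ℝ) (δ : ℝ) (hδ : 0 < δ)
    (f : (Fin N → ℝ) → ℝ)
    (ζ ζ' : Fin N → ℤ)
    (x : Fin N → ℝ)
    (hx : ∀ i, x i ∈ Set.Icc (x₀ i + δ * ζ i) (x₀ i + δ * ζ i + δ))
    (hx' : ∀ i, x i ∈ Set.Icc (x₀ i + δ * ζ' i) (x₀ i + δ * ζ' i + δ)) :
    interpLam (fun i => x₀ i + δ * ζ i) δ f x = interpLam (fun i => x₀ i + δ * ζ' i) δ f x := by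
  have key := fun i b => interp_coord (x₀ i) δ (x i) hδ (ζ i) (ζ' i) (hx i) (hx' i) b
  have hinv : Function.Involutive
      (fun (γ : Fin N → Bool) (i : Fin N) => (γ i ^^ decide (ζ i ≠ ζ' i))) := by
    intro γ
    funext i
    simp only [Bool.xor_assoc, Bool.xor_self, Bool.xor_false]
  unfold interpLam
  refine Fintype.sum_equiv hinv.toPerm _ _ ?_
  intro γ
  change _ = (∏ i, if (γ i ^^ decide (ζ i ≠ ζ' i)) then (x i - (x₀ i + δ * ζ' i)) / δ
      else 1 - (x i - (x₀ i + δ * ζ' i)) / δ) *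
    f (fun i => x₀ i + δ * ζ' i + if (γ i ^^ decide (ζ i ≠ ζ' i)) then δ else 0)
  rw [← Finset.prod_congr rfl (fun i _ => (key i (γ i)).1)]
  by_cases hz : ∃ i, (if γ i then (x i - (x₀ i + δ * ζ i)) / δ
      else 1 - (x i - (x₀ i + δ * ζ i)) / δ) = 0
  · obtain ⟨i, hi⟩ := hz
    rw [Finset.prod_eq_zero (Finset.mem_univ i) hi, zero_mul, zero_mul]
  · have hv := fun i => (key i (γ i)).2.resolve_left (fun hi => hz ⟨i, hi⟩)
    rw [funext hv]
end
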